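/- arXiv:2310.09287 — 2 statements merged into one kernel-verified Lean document; each statement's English description precedes it below -/
import Mathlib

section
/- Let S = ⟨m, am+1, bm+t⟩ be a MANS-semigroup with embedding dimension 3, where m ≥ 3, a ≥ 1, t ∈ {2, …, m−1}, and (t−1)(am+1) < bm+t < t(am+1). Then S is pseudo-symmetric if and only if t = (m+1)/2 and t = (b+1)/a (i.e. 2t = m+1 and ta = b+1). -/
/-- `S ⊆ ℕ` is a numerical semigroup: contains `0`, closed under addition,
and has finite complement in `ℕ`. -/
def IsNumSgp (S : Set ℕ) : Prop :=
  0 ∈ S ∧ (∀ a ∈ S, ∀ b ∈ S, a + b ∈ S) ∧ Sᶜ.Finite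

/-- `⟨A⟩`: the additive submonoid of `ℕ` generated by `A`, viewed as a set. -/
def gen (A : Set ℕ) : Set ℕ := (AddSubmonoid.closure A : Set ℕ)

/-- The multiplicity `m(S)`: the least nonzero element of `S`. -/
noncomputable def nsMult (S : Set ℕ) : ℕ := sInf {x | x ∈ S ∧ x ≠ 0}

/-- The minimal system of generators of `S`: the nonzero elements of `S` that are
not a sum of two nonzero elements of `S`. -/
def msg (S : Set ℕ) : Set ℕ :=
  {x | x ∈ S ∧ x ≠ 0 ∧ ∀ a ∈ S, a ≠ 0 → ∀ b ∈ S, b ≠ 0 → x ≠ a + b}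

/-- The ratio `r(S)`: the second smallest minimal generator of `S`. -/
noncomputable def nsRatio (S : Set ℕ) : ℕ := sInf (msg S \ {nsMult S})

/-- The maximum minimal generator `M(S)`. -/
noncomputable def nsMaxGen (S : Set ℕ) : ℕ := sSup (msg S)

/-- The Apéry set `Ap(S, n) = {s ∈ S : s - n ∉ S}`. -/
def AperySet (S : Set ℕ) (n : ℕ) : Set ℕ :=
  {s | s ∈ S ∧ ¬ ∃ y ∈ S, y + n = s}

/-- `w(i)`: the least element of `S` congruent to `i` modulo `n`. -/
noncomputable def aperyW (S : Set ℕ) (n i : ℕ) : ℕ :=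
  sInf {s | s ∈ S ∧ s % n = i % n}

/-- A MANS-semigroup: a numerical semigroup whose Apéry set with respect to the
multiplicity is monotone, i.e. `w(1) < w(2) < ⋯ < w(m(S) - 1)`. -/
def IsMANS (S : Set ℕ) : Prop :=
  IsNumSgp S ∧ ∀ i : ℕ, 0 < i → i + 1 < nsMult S →
    aperyW S (nsMult S) i < aperyW S (nsMult S) (i + 1)

/-- The Frobenius number `F(S)`: the greatest integer not in `S`. -/
noncomputable def nsFrob (S : Set ℕ) : ℕ := sSup {x | x ∉ S}

/-- The genus `g(S)`: the number of gaps of `S`. -/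
noncomputable def nsGenus (S : Set ℕ) : ℕ := Set.ncard {x | x ∉ S}

/-- The set of pseudo-Frobenius numbers of `S`: integers `x ∉ S` such that
`x + s ∈ S` for every nonzero `s ∈ S`. -/
def nsPF (S : Set ℕ) : Set ℤ :=
  {x : ℤ | x ∉ ((Nat.cast : ℕ → ℤ) '' S) ∧
    ∀ s ∈ S, s ≠ 0 → x + (s : ℤ) ∈ ((Nat.cast : ℕ → ℤ) '' S)}

/-- The type `t(S)`: the number of pseudo-Frobenius numbers of `S`. -/
noncomputable def nsType (S : Set ℕ) : ℕ := (nsPF S).ncard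

/-- `S` is pseudo-symmetric iff `F(S) = 2 g(S) - 2`. -/
def IsPseudoSymmetric (S : Set ℕ) : Prop :=
  (nsFrob S : ℤ) = 2 * (nsGenus S : ℤ) - 2

/-!
Writing `n = m * x + i` with `i < m`, the element `n` lies in `S` iff `x` is at least the cheapest
way of reaching the residue `i`. With `a * m + 1` contributing `1` to the residue at cost `a`, and
`b * m + t` contributing `t` at cost `b`, the inequalities `(t - 1) * a ≤ b ≤ t * a` make the greedy
cost `k i = b * (i / t) + a * (i % t)` optimal and monotone. Hence `F(S) + 1 = m * k (m - 1)` and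
`g(S) = ∑ i < m, k i`. Pairing `i` with `m - 1 - i` compares the two: `k i + k (m - 1 - i)` exceeds
`k (m - 1)` by `t * a - b` if adding the two residues modulo `t` produces a carry, and by nothing
otherwise. Therefore `2 g(S) - F(S) - 1` is `t * a - b` times the number of carries, and `S` is
pseudo-symmetric iff this product is `1`.
-/

open Finset

/-- `k 0, …, k (m - 1)` are the Kunz coordinates of `S` modulo `m`: the least element of `S`
congruent to `i` modulo `m` is `m * k i + i`. Values of `k` outside `{0, …, m - 1}` are irrelevant
(for `m ≠ 0`). -/
def HasKunzCoords (S : Set ℕ) (m : ℕ) (k : ℕ → ℕ) : Prop :=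
  ∀ n, n ∈ S ↔ k (n % m) ≤ n / m

namespace HasKunzCoords

variable {S : Set ℕ} {m : ℕ} {k : ℕ → ℕ}

theorem notMem_iff (h : HasKunzCoords S m k) {n : ℕ} : n ∉ S ↔ n / m < k (n % m) := by
  rw [h n, not_le]

theorem mul_add_notMem_iff (h : HasKunzCoords S m k) {i x : ℕ} (hi : i < m) :
    m * x + i ∉ S ↔ x < k i := by
  rw [h.notMem_iff, Nat.mul_add_mod, Nat.mod_eq_of_lt hi, Nat.mul_add_div (by lia),
    Nat.div_eq_of_lt hi, add_zero]

theorem nsGenus_eq_sum (h : HasKunzCoords S m k) (hm : 0 < m) :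
    nsGenus S = ∑ i ∈ range m, k i := by
  let gaps : Finset (Σ _ : ℕ, ℕ) := (range m).sigma fun i ↦ range (k i)
  have hbij : Set.BijOn (fun n ↦ (⟨n % m, n / m⟩ : Σ _ : ℕ, ℕ)) {n | n ∉ S} gaps := by
    refine ⟨fun n hn ↦ ?_, fun n _ n' _ hnn' ↦ ?_, fun ⟨i, x⟩ hix ↦ ?_⟩
    · simpa [gaps, Nat.mod_lt n hm] using h.notMem_iff.1 hn
    · simp only [Sigma.mk.injEq, heq_eq_eq] at hnn'
      rw [← Nat.div_add_mod n m, ← Nat.div_add_mod n' m, hnn'.1, hnn'.2]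
    · obtain ⟨hi, hx⟩ : i < m ∧ x < k i := by simpa [gaps] using hix
      refine ⟨m * x + i, (h.mul_add_notMem_iff hi).2 hx, ?_⟩
      simp [Nat.mod_eq_of_lt hi, Nat.mul_add_div hm, Nat.div_eq_of_lt hi]
  rw [nsGenus, ← hbij.injOn.ncard_image, hbij.image_eq, Set.ncard_coe_finset, card_sigma]
  simp only [card_range]

theorem nsFrob_add_one (h : HasKunzCoords S m k) (hm : 0 < m) (hpos : 0 < k (m - 1))
    (hmax : ∀ i < m, k i ≤ k (m - 1)) : nsFrob S + 1 = m * k (m - 1) := by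
  obtain ⟨x, hx⟩ := Nat.exists_eq_add_of_lt hpos
  rw [zero_add] at hx
  have hgreatest : IsGreatest {n | n ∉ S} (m * x + (m - 1)) := by
    refine ⟨(h.mul_add_notMem_iff (by lia)).2 (by lia), fun n hn ↦ ?_⟩
    have hdiv : n / m < x + 1 := hx ▸ (h.notMem_iff.1 hn).trans_le (hmax _ (Nat.mod_lt n hm))
    have hlt : n < m * (x + 1) := by rwa [mul_comm, ← Nat.div_lt_iff_lt_mul hm]
    lia
  rw [nsFrob, hgreatest.csSup_eq, hx]
  lia

theorem isPseudoSymmetric_iff (h : HasKunzCoords S m k) (hm : 0 < m) (hpos : 0 < k (m - 1))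
    (hmax : ∀ i < m, k i ≤ k (m - 1)) :
    IsPseudoSymmetric S ↔ 2 * ∑ i ∈ range m, k i = m * k (m - 1) + 1 := by
  rw [IsPseudoSymmetric, h.nsGenus_eq_sum hm, ← h.nsFrob_add_one hm hpos hmax]
  lia

end HasKunzCoords

section Carry

variable {t : ℕ}

theorem le_mod_add_mod_iff (ht : 0 < t) (i j : ℕ) : t ≤ i % t + j % t ↔ (i + j) % t < i % t := by
  have hmod := Nat.add_mod_add_ite i j t
  have hj := Nat.mod_lt j ht
  split_ifs at hmod <;> lia

theorem count_lt_mod (q r : ℕ) :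
    Nat.count (fun i ↦ r < i % t) (t * q + (r + 1)) = q * (t - 1 - r) := by
  induction q with
  | zero =>
    rw [mul_zero, zero_add, zero_mul, Nat.count_eq_card_filter_range, card_eq_zero,
      filter_eq_empty_iff]
    exact fun i hi ↦ not_lt.2 ((Nat.mod_le i t).trans (mem_range_succ_iff.1 hi))
  | succ q ih =>
    have hfilter : {i ∈ range t | r < i % t} = Ioo r t := by
      ext i
      grind [Nat.mod_eq_of_lt]
    have hperiod : Nat.count (fun i ↦ r < i % t) t = t - 1 - r := by
      rw [Nat.count_eq_card_filter_range, hfilter, Nat.card_Ioo, Nat.sub_right_comm]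
    rw [show t * (q + 1) + (r + 1) = t + (t * q + (r + 1)) by ring, Nat.count_add, hperiod]
    simp only [Nat.add_mod_left, ih]
    ring

theorem card_filter_mod_lt_mod (n : ℕ) :
    #{i ∈ range (n + 1) | n % t < i % t} = n / t * (t - 1 - n % t) := by
  rw [← Nat.count_eq_card_filter_range, ← count_lt_mod, ← add_assoc, Nat.div_add_mod]

theorem div_mul_sub_mod_eq_one_iff {n : ℕ} (ht : 1 < t) :
    n / t * (t - 1 - n % t) = 1 ↔ n + 2 = 2 * t := by
  have hn := Nat.div_add_mod n t
  constructor
  · intro h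
    obtain ⟨hq, hr⟩ := mul_eq_one.1 h
    rw [hq] at hn
    lia
  · intro h
    have hq : n / t = 1 := Nat.div_eq_of_lt_le (by lia) (by lia)
    rw [hq] at hn ⊢
    lia

end Carry

/-- The cost of the greedy representation of `i` as a sum of `t`s, each of cost `b`, and `1`s, each
of cost `a`. If `(t - 1) * a ≤ b ≤ t * a`, these are the Kunz coordinates modulo `m` of
`⟨m, a * m + 1, b * m + t⟩`. -/
def greedyCost (a b t i : ℕ) : ℕ := b * (i / t) + a * (i % t)

section GreedyCost

variable {a b t : ℕ}

@[simp]
theorem greedyCost_zero : greedyCost a b t 0 = 0 := by simp [greedyCost]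

theorem greedyCost_one (ht : 1 < t) : greedyCost a b t 1 = a := by
  simp [greedyCost, Nat.mod_eq_of_lt ht, Nat.div_eq_of_lt ht]

theorem greedyCost_self (ht : 0 < t) : greedyCost a b t t = b := by
  simp [greedyCost, Nat.div_self ht]

-- A carry replaces `t` ones by a single `t`.
theorem greedyCost_add (ht : 0 < t) (i j : ℕ) :
    greedyCost a b t (i + j) + (if t ≤ i % t + j % t then t * a else 0) =
      greedyCost a b t i + greedyCost a b t j + if t ≤ i % t + j % t then b else 0 := by
  have hmod := Nat.add_mod_add_ite i j t
  simp only [greedyCost, Nat.add_div ht]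
  split_ifs at hmod ⊢ <;> linear_combination a * hmod

theorem greedyCost_add_le (ht : 0 < t) (hb : b ≤ t * a) (i j : ℕ) :
    greedyCost a b t (i + j) ≤ greedyCost a b t i + greedyCost a b t j := by
  have hadd := greedyCost_add (a := a) (b := b) ht i j
  split_ifs at hadd <;> lia

theorem greedyCost_mono (ht : 1 < t) (hb : (t - 1) * a ≤ b) : Monotone (greedyCost a b t) := by
  refine monotone_nat_of_le_succ fun i ↦ ?_
  have hadd := greedyCost_add (a := a) (b := b) (by lia : 0 < t) i 1
  have hta : t * a ≤ a + b := by
    rw [Nat.sub_one_mul] at hb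
    lia
  rw [greedyCost_one ht] at hadd
  split_ifs at hadd <;> lia

-- Each carry contributes `t * a - b`, written additively because it may be negative.
theorem two_mul_sum_greedyCost (ht : 0 < t) (n : ℕ) :
    2 * ∑ i ∈ range (n + 1), greedyCost a b t i + n / t * (t - 1 - n % t) * b =
      (n + 1) * greedyCost a b t n + n / t * (t - 1 - n % t) * (t * a) := by
  have hpair : ∀ i ∈ range (n + 1),
      greedyCost a b t i + greedyCost a b t (n - i) + (if n % t < i % t then b else 0) =
        greedyCost a b t n + if n % t < i % t then t * a else 0 := by
    intro i hi
    have hin : i + (n - i) = n := Nat.add_sub_cancel' (mem_range_succ_iff.1 hi)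
    have hadd := greedyCost_add (a := a) (b := b) ht i (n - i)
    simp only [le_mod_add_mod_iff ht, hin] at hadd
    exact hadd.symm
  have hsum := sum_congr rfl hpair
  simp only [sum_add_distrib, ← sum_filter, sum_const, smul_eq_mul, card_range,
    card_filter_mod_lt_mod] at hsum
  have hreflect := sum_range_reflect (greedyCost a b t) (n + 1)
  simp only [Nat.add_sub_cancel] at hreflect
  rwa [hreflect, ← two_mul] at hsum

end GreedyCost

theorem hasKunzCoords_gen {m a b t : ℕ} (ht : 1 < t) (htm : t < m) (hlb : (t - 1) * a ≤ b)
    (hub : b ≤ t * a) :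
    HasKunzCoords (gen {m, a * m + 1, b * m + t}) m (greedyCost a b t) := by
  have hm : 0 < m := by lia
  refine fun n ↦ ⟨fun hn ↦ ?_, fun hn ↦ ?_⟩
  · induction hn using AddSubmonoid.closure_induction with
    | mem x hx =>
      rcases hx with rfl | rfl | rfl
      · simp
      · rw [Nat.mul_add_mod', Nat.mod_eq_of_lt (by lia), greedyCost_one ht,
          Nat.le_div_iff_mul_le hm]
        exact Nat.le_add_right _ _
      · rw [Nat.mul_add_mod', Nat.mod_eq_of_lt htm, greedyCost_self (by lia),
          Nat.le_div_iff_mul_le hm]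
        exact Nat.le_add_right _ _
    | zero => simp
    | add x y _ _ hx hy =>
      calc greedyCost a b t ((x + y) % m)
          ≤ greedyCost a b t (x % m + y % m) :=
            greedyCost_mono ht hlb (by rw [Nat.add_mod]; exact Nat.mod_le _ _)
        _ ≤ greedyCost a b t (x % m) + greedyCost a b t (y % m) :=
            greedyCost_add_le (by lia) hub _ _
        _ ≤ x / m + y / m := add_le_add hx hy
        _ ≤ (x + y) / m := Nat.div_add_div_le_add_div ..
  · obtain ⟨d, hd⟩ := Nat.exists_eq_add_of_le hn
    have hdecomp : n = (n % m / t) • (b * m + t) + (n % m % t) • (a * m + 1) + d • m := by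
      calc n = m * (n / m) + (t * (n % m / t) + n % m % t) := by
            rw [Nat.div_add_mod, Nat.div_add_mod]
        _ = _ := by rw [hd, greedyCost]; simp only [smul_eq_mul]; ring
    have hgen : ∀ g ∈ ({m, a * m + 1, b * m + t} : Set ℕ), ∀ c : ℕ,
        c • g ∈ AddSubmonoid.closure {m, a * m + 1, b * m + t} :=
      fun g hg c ↦ nsmul_mem (AddSubmonoid.subset_closure hg) c
    rw [hdecomp]
    exact add_mem (add_mem (hgen _ (by simp) _) (hgen _ (by simp) _)) (hgen _ (by simp) _)

theorem isPseudoSymmetric_gen_iff {m a b t : ℕ} (ha : 0 < a) (ht : 1 < t) (htm : t < m)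
    (hlb : (t - 1) * a ≤ b) (hub : b ≤ t * a) :
    IsPseudoSymmetric (gen {m, a * m + 1, b * m + t}) ↔
      (m - 1) / t * (t - 1 - (m - 1) % t) * (t * a - b) = 1 := by
  have hmono := greedyCost_mono ht hlb
  have hpos : 0 < greedyCost a b t (m - 1) :=
    calc 0 < greedyCost a b t 1 := by rwa [greedyCost_one ht]
      _ ≤ greedyCost a b t (m - 1) := hmono (by lia)
  rw [(hasKunzCoords_gen ht htm hlb hub).isPseudoSymmetric_iff (by lia) hpos
    fun i hi ↦ hmono (by lia)]
  have hsum := two_mul_sum_greedyCost (a := a) (b := b) (by lia : 0 < t) (m - 1)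
  have hle := Nat.mul_le_mul_left ((m - 1) / t * (t - 1 - (m - 1) % t)) hub
  rw [Nat.sub_add_cancel (by lia : 1 ≤ m)] at hsum
  rw [Nat.mul_sub]
  lia

theorem sub_one_mul_mul_add_one_lt_iff {m a b t : ℕ} (hm : 0 < m) (ht : 0 < t) :
    (t - 1) * (a * m + 1) < b * m + t ↔ (t - 1) * a ≤ b := by
  obtain ⟨s, rfl⟩ := Nat.exists_eq_add_of_lt ht
  rw [← Nat.mul_le_mul_right_iff hm]
  lia

theorem mul_add_lt_mul_mul_add_one_iff {m a b t : ℕ} (hm : 0 < m) :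
    b * m + t < t * (a * m + 1) ↔ b < t * a := by
  rw [← Nat.mul_lt_mul_right (b := b) hm]
  lia

theorem stmt15 (m a b t : ℕ) (hm : 3 ≤ m) (ha : 1 ≤ a) (ht2 : 2 ≤ t) (htm : t ≤ m - 1)
    (h1 : (t - 1) * (a * m + 1) < b * m + t) (h2 : b * m + t < t * (a * m + 1)) :
    IsPseudoSymmetric (gen {m, a * m + 1, b * m + t}) ↔
      2 * t = m + 1 ∧ t * a = b + 1 := by
  have hlb : (t - 1) * a ≤ b := (sub_one_mul_mul_add_one_lt_iff (by lia) (by lia)).1 h1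
  have hub : b < t * a := (mul_add_lt_mul_mul_add_one_iff (by lia)).1 h2
  rw [isPseudoSymmetric_gen_iff ha ht2 (by lia) hlb hub.le, mul_eq_one,
    div_mul_sub_mod_eq_one_iff ht2]
  lia
end

section
/- Let S be a MANS-semigroup with msg(S) = {n₁ < n₂ < ⋯ < n_e}, where 2 ≤ e ≤ n₁ − 1, and write Ap(S, n₁) = {w(0), w(1), …, w(n₁−1)}. Suppose n_{e+1} ∈ ℕ satisfies: n_e < n_{e+1}, n_e mod n₁ < n_{e+1} mod n₁, and w((n_{e+1} mod n₁) − 1) < n_{e+1} < w(n_{e+1} mod n₁). Then S' = ⟨n₁, …, n_e, n_{e+1}⟩ is a MANS-semigroup with e(S') = e(S) + 1. -/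
/-!
Write `m` for the multiplicity. Minimality of `w(i)` turns the condition `w(i) < w(i + 1)` into a
descent property: every `x ∈ S` with `m ∤ x` lies above some `y ∈ S` with `y + 1 ≡ x` modulo `m`.
If `m ∤ a + b`, then one of the summands is not divisible by `m`, and replacing it by its descent
gives a descent of `a + b`; hence it is enough to check the property on generators. The old
generators inherit it from `S`, and `w(N mod m - 1)` is a descent of the new generator `N`.
Finally, a decomposition of a number `≤ N` into nonzero summands only involves elements of `S`, so
adjoining `N ∉ S` above all minimal generators destroys none of them.
-/

section Generation

variable {S A B : Set ℕ} {N x : ℕ}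

theorem subset_gen : A ⊆ gen A :=
  AddSubmonoid.subset_closure

theorem zero_mem_gen : 0 ∈ gen A :=
  (AddSubmonoid.closure A).zero_mem

theorem add_mem_gen {a b : ℕ} (ha : a ∈ gen A) (hb : b ∈ gen A) : a + b ∈ gen A :=
  (AddSubmonoid.closure A).add_mem ha hb

theorem gen_mono (h : A ⊆ B) : gen A ⊆ gen B :=
  AddSubmonoid.closure_mono h

theorem gen_msg (hzero : 0 ∈ S) (hadd : ∀ a ∈ S, ∀ b ∈ S, a + b ∈ S) : gen (msg S) = S := by
  refine Set.Subset.antisymm (fun x hx ↦ ?_) fun x hx ↦ ?_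
  · induction hx using AddSubmonoid.closure_induction with
    | mem x hx => exact hx.1
    | zero => exact hzero
    | add a b _ _ ha hb => exact hadd a ha b hb
  · induction x using Nat.strong_induction_on with
    | _ x ih =>
      by_cases hx0 : x = 0
      · exact hx0 ▸ zero_mem_gen
      by_cases hirr : x ∈ msg S
      · exact subset_gen hirr
      obtain ⟨a, ha, ha0, b, hb, hb0, rfl⟩ :
          ∃ a ∈ S, a ≠ 0 ∧ ∃ b ∈ S, b ≠ 0 ∧ x = a + b := by
        by_contra! h
        exact hirr ⟨hx, hx0, h⟩
      exact add_mem_gen (ih a (by omega) ha) (ih b (by omega) hb)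

theorem msg_gen_subset : msg (gen A) ⊆ A := by
  rintro x ⟨hx, hx0, hirr⟩
  induction hx using AddSubmonoid.closure_induction with
  | mem x hx => exact hx
  | zero => exact absurd rfl hx0
  | add a b ha hb iha ihb =>
    rcases eq_or_ne a 0 with rfl | ha0
    · simp only [zero_add] at hx0 hirr ⊢
      exact ihb hx0 hirr
    rcases eq_or_ne b 0 with rfl | hb0
    · exact iha hx0 hirr
    · exact absurd rfl (hirr a ha ha0 b hb hb0)

theorem mem_msg_of_subset {T : Set ℕ} (hST : S ⊆ T) (hxT : x ∈ msg T) (hxS : x ∈ S) :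
    x ∈ msg S :=
  ⟨hxS, hxT.2.1, fun a ha ha0 b hb hb0 ↦ hxT.2.2 a (hST ha) ha0 b (hST hb) hb0⟩

theorem mem_gen_of_mem_gen_insert_of_lt (hx : x ∈ gen (insert N A)) (hxN : x < N) :
    x ∈ gen A := by
  induction hx using AddSubmonoid.closure_induction with
  | mem x hx => exact subset_gen (hx.resolve_left hxN.ne)
  | zero => exact zero_mem_gen
  | add a b _ _ iha ihb => exact add_mem_gen (iha (by omega)) (ihb (by omega))

theorem msg_gen_insert (hlt : ∀ g ∈ msg (gen A), g < N) (hN : N ∉ gen A) :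
    msg (gen (insert N A)) = insert N (msg (gen A)) := by
  have hsub : gen A ⊆ gen (insert N A) := gen_mono (Set.subset_insert N A)
  have hsummands : ∀ x ≤ N, ∀ a ∈ gen (insert N A), a ≠ 0 → ∀ b ∈ gen (insert N A), b ≠ 0 →
      x = a + b → a ∈ gen A ∧ b ∈ gen A := fun x hx a ha ha0 b hb hb0 hab ↦
    ⟨mem_gen_of_mem_gen_insert_of_lt ha (by omega), mem_gen_of_mem_gen_insert_of_lt hb (by omega)⟩
  refine Set.Subset.antisymm (fun x hx ↦ ?_) (Set.insert_subset ?_ fun g hg ↦ ?_)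
  · exact (msg_gen_subset hx).imp_right fun hxA ↦ mem_msg_of_subset hsub hx (subset_gen hxA)
  · refine ⟨subset_gen (Set.mem_insert N A), fun hN0 ↦ hN (hN0 ▸ zero_mem_gen), ?_⟩
    intro a ha ha0 b hb hb0 hab
    obtain ⟨haA, hbA⟩ := hsummands N le_rfl a ha ha0 b hb hb0 hab
    exact hN (hab ▸ add_mem_gen haA hbA)
  · refine ⟨hsub hg.1, hg.2.1, fun a ha ha0 b hb hb0 hab ↦ ?_⟩
    obtain ⟨haA, hbA⟩ := hsummands g (hlt g hg).le a ha ha0 b hb hb0 hab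
    exact hg.2.2 a haA ha0 b hbA hb0 hab

end Generation

section Multiplicity

variable {S A : Set ℕ} {N : ℕ}

theorem isLeast_nsMult (hS : 0 < nsMult S) : IsLeast {x | x ∈ S ∧ x ≠ 0} (nsMult S) :=
  ⟨Nat.sInf_mem (Nat.nonempty_of_pos_sInf hS), fun _ ↦ Nat.sInf_le⟩

theorem isLeast_msg_nsMult (hS : 0 < nsMult S) : IsLeast (msg S) (nsMult S) := by
  obtain ⟨⟨hmem, hne⟩, hle⟩ := isLeast_nsMult hS
  refine ⟨⟨hmem, hne, fun a ha ha0 b _ hb0 hab ↦ ?_⟩, fun x hx ↦ hle ⟨hx.1, hx.2.1⟩⟩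
  have : nsMult S ≤ a := hle ⟨ha, ha0⟩
  omega

theorem nsMult_gen_insert (hpos : 0 < nsMult (gen A)) (hN : nsMult (gen A) ≤ N) :
    nsMult (gen (insert N A)) = nsMult (gen A) := by
  obtain ⟨⟨hmem, hne⟩, hle⟩ := isLeast_nsMult hpos
  refine IsLeast.csInf_eq ⟨⟨gen_mono (Set.subset_insert N A) hmem, hne⟩, ?_⟩
  rintro x ⟨hx, hx0⟩
  rcases lt_or_ge x N with hxN | hNx
  · exact hle ⟨mem_gen_of_mem_gen_insert_of_lt hx hxN, hx0⟩
  · exact hN.trans hNx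

end Multiplicity

theorem aperyW_le {S : Set ℕ} {n i s : ℕ} (hs : s ∈ S) (h : s ≡ i [MOD n]) : aperyW S n i ≤ s :=
  Nat.sInf_le ⟨hs, h⟩

theorem notMem_of_lt_aperyW {S : Set ℕ} {n x : ℕ} (h : x < aperyW S n (x % n)) : x ∉ S :=
  fun hx ↦ (aperyW_le hx (Nat.mod_modEq x n).symm).not_gt h

namespace IsNumSgp

variable {S A : Set ℕ} {n : ℕ}

theorem gen_of_subset (hS : IsNumSgp S) (h : S ⊆ gen A) : IsNumSgp (gen A) :=
  ⟨zero_mem_gen, fun _ ha _ hb ↦ add_mem_gen ha hb,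
    hS.2.2.subset (Set.compl_subset_compl.2 h)⟩

theorem exists_mem_modEq (hS : IsNumSgp S) (hn : 0 < n) (i : ℕ) : ∃ s ∈ S, s ≡ i [MOD n] := by
  obtain ⟨B, hB⟩ := hS.2.2.bddAbove
  refine ⟨i + n * (B + 1), ?_, by simp [Nat.ModEq]⟩
  by_contra h
  have : i + n * (B + 1) ≤ B := hB h
  have : B + 1 ≤ n * (B + 1) := Nat.le_mul_of_pos_left _ hn
  omega

theorem nsMult_pos (hS : IsNumSgp S) : 0 < nsMult S := by
  obtain ⟨x, hx, hx0⟩ := (Set.infinite_of_finite_compl hS.2.2).exists_gt 0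
  exact Nat.pos_of_ne_zero (Nat.sInf_mem (s := {x | x ∈ S ∧ x ≠ 0}) ⟨x, hx, hx0.ne'⟩).2

theorem aperyW_spec (hS : IsNumSgp S) (hn : 0 < n) (i : ℕ) :
    aperyW S n i ∈ S ∧ aperyW S n i ≡ i [MOD n] :=
  Nat.sInf_mem (hS.exists_mem_modEq hn i)

end IsNumSgp

section Descent

variable {S A : Set ℕ} {N m : ℕ}

theorem IsMANS.exists_lt_modEq (hS : IsMANS S) {x : ℕ} (hx : x ∈ S) (hdvd : ¬ nsMult S ∣ x) :
    ∃ y ∈ S, y < x ∧ y + 1 ≡ x [MOD nsMult S] := by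
  have hpos := hS.1.nsMult_pos
  have hlt : x % nsMult S < nsMult S := Nat.mod_lt x hpos
  obtain ⟨i, hi⟩ : ∃ i, x % nsMult S = i + 1 :=
    Nat.exists_eq_succ_of_ne_zero (mt Nat.dvd_of_mod_eq_zero hdvd)
  have hxi : x ≡ i + 1 [MOD nsMult S] := hi ▸ (Nat.mod_modEq x _).symm
  rcases Nat.eq_zero_or_pos i with rfl | hi0
  · exact ⟨0, hS.1.1, Nat.pos_of_ne_zero fun h ↦ hdvd (h ▸ dvd_zero _), hxi.symm⟩
  · obtain ⟨hmem, hmod⟩ := hS.1.aperyW_spec hpos i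
    exact ⟨_, hmem, (hS.2 i hi0 (hi ▸ hlt)).trans_le (aperyW_le hx hxi),
      (hmod.add_right 1).trans hxi.symm⟩

theorem IsNumSgp.isMANS_of_exists_lt_modEq (hS : IsNumSgp S)
    (h : ∀ x ∈ S, ¬ nsMult S ∣ x → ∃ y ∈ S, y < x ∧ y + 1 ≡ x [MOD nsMult S]) : IsMANS S := by
  refine ⟨hS, fun i _ hi ↦ ?_⟩
  obtain ⟨hmem, hmod⟩ := hS.aperyW_spec hS.nsMult_pos (i + 1)
  have hdvd : ¬ nsMult S ∣ aperyW S (nsMult S) (i + 1) := fun hd ↦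
    Nat.not_dvd_of_pos_of_lt i.succ_pos hi ((hmod.dvd_iff dvd_rfl).1 hd)
  obtain ⟨y, hy, hlt, hymod⟩ := h _ hmem hdvd
  exact (aperyW_le hy ((hymod.trans hmod).add_right_cancel' 1)).trans_lt hlt

theorem exists_lt_modEq_of_mem_gen
    (h : ∀ x ∈ A, ¬ m ∣ x → ∃ y ∈ gen A, y < x ∧ y + 1 ≡ x [MOD m]) :
    ∀ x ∈ gen A, ¬ m ∣ x → ∃ y ∈ gen A, y < x ∧ y + 1 ≡ x [MOD m] := by
  intro x hx hdvd
  induction hx using AddSubmonoid.closure_induction with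
  | mem x hx => exact h x hx hdvd
  | zero => exact absurd (dvd_zero m) hdvd
  | add a b ha hb iha ihb =>
    by_cases hda : m ∣ a
    · obtain ⟨y, hy, hlt, hmod⟩ := ihb fun hdb ↦ hdvd (dvd_add hda hdb)
      exact ⟨a + y, add_mem_gen ha hy, by omega, hmod.add_left a⟩
    · obtain ⟨y, hy, hlt, hmod⟩ := iha hda
      exact ⟨y + b, add_mem_gen hy hb, by omega, by
        simpa only [add_right_comm] using hmod.add_right b⟩

theorem IsMANS.gen_insert (hA : IsMANS (gen A)) (hle : nsMult (gen A) ≤ N)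
    (hlt : aperyW (gen A) (nsMult (gen A)) (N % nsMult (gen A) - 1) < N) :
    IsMANS (gen (insert N A)) := by
  have hpos := hA.1.nsMult_pos
  have hsub : gen A ⊆ gen (insert N A) := gen_mono (Set.subset_insert N A)
  refine (hA.1.gen_of_subset hsub).isMANS_of_exists_lt_modEq ?_
  rw [nsMult_gen_insert hpos hle]
  refine exists_lt_modEq_of_mem_gen ?_
  rintro x (rfl | hx) hdvd
  · obtain ⟨hmem, hmod⟩ := hA.1.aperyW_spec hpos (x % nsMult (gen A) - 1)
    refine ⟨_, hsub hmem, hlt, (hmod.add_right 1).trans ?_⟩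
    rw [Nat.sub_add_cancel (Nat.pos_of_ne_zero (mt Nat.dvd_of_mod_eq_zero hdvd))]
    exact Nat.mod_modEq x _
  · obtain ⟨y, hy, hyx, hmod⟩ := hA.exists_lt_modEq (subset_gen hx) hdvd
    exact ⟨y, hsub hy, hyx, hmod⟩

end Descent

theorem stmt16 (S : Set ℕ) (e : ℕ) (he : 2 ≤ e) (n : Fin e → ℕ)
    (hen : e ≤ n ⟨0, by omega⟩ - 1)
    (hmono : StrictMono n) (hmsg : msg S = Set.range n) (hM : IsMANS S)
    (N : ℕ) (hN1 : n ⟨e - 1, by omega⟩ < N)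
    (hN2 : n ⟨e - 1, by omega⟩ % n ⟨0, by omega⟩ < N % n ⟨0, by omega⟩)
    (hN3 : aperyW S (n ⟨0, by omega⟩) (N % n ⟨0, by omega⟩ - 1) < N)
    (hN4 : N < aperyW S (n ⟨0, by omega⟩) (N % n ⟨0, by omega⟩)) :
    IsMANS (gen (insert N (Set.range n))) ∧
      (msg (gen (insert N (Set.range n)))).ncard = (msg S).ncard + 1 := by
  obtain rfl : gen (Set.range n) = S := hmsg ▸ gen_msg hM.1.1 hM.1.2.1
  have hmult : nsMult (gen (Set.range n)) = n ⟨0, by omega⟩ := by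
    refine (hmsg ▸ isLeast_msg_nsMult hM.1.nsMult_pos).unique ⟨Set.mem_range_self _, ?_⟩
    exact Set.forall_mem_range.2 fun i ↦ hmono.monotone (Nat.zero_le i)
  have hlt : ∀ g ∈ msg (gen (Set.range n)), g < N := by
    rw [hmsg, Set.forall_mem_range]
    exact fun i ↦ (hmono.monotone (Nat.le_sub_one_of_lt i.isLt)).trans_lt hN1
  have hle : nsMult (gen (Set.range n)) ≤ N :=
    (hlt _ (isLeast_msg_nsMult hM.1.nsMult_pos).1).le
  refine ⟨hM.gen_insert hle (hmult ▸ hN3), ?_⟩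
  have hfin : (msg (gen (Set.range n))).Finite := (Set.finite_range n).subset msg_gen_subset
  rw [msg_gen_insert hlt (notMem_of_lt_aperyW hN4)]
  exact Set.ncard_insert_of_notMem (fun h ↦ (hlt N h).false) hfin
end
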